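/- Let p, q be nonzero coprime integers and α, β ∈ ℝ. Then ∫₀¹ Φ(p·t − α, q·t − β) dt = (8/(π² p q)) · Σ_{k=1}^{∞} sin(πkp/2)·sin(πkq/2)·cos(2πk(pβ − qα)) / k², where Φ(u,v) = sgn(cos(2πu)·cos(2πv)) and the series converges absolutely. -/

import Mathlib

open Filter Real MeasureTheory

noncomputable def sgn (t : ℝ) : ℝ := if 0 < t then 1 else if t < 0 then -1 else 0

noncomputable def Φ (u v : ℝ) : ℝ := sgn (Real.cos (2 * π * u) * Real.cos (2 * π * v))

open scoped ComplexConjugate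

open Complex (I exp)

/-- **Parseval's identity** for the inner product of two square integrable functions on the
circle. -/
theorem hasSum_conj_fourierCoeff_mul {T : ℝ} [Fact (0 < T)] {f g : AddCircle T → ℂ}
    (hf : MemLp f 2 AddCircle.haarAddCircle) (hg : MemLp g 2 AddCircle.haarAddCircle) :
    HasSum (fun n : ℤ => conj (fourierCoeff f n) * fourierCoeff g n)
      (∫ x, conj (f x) * g x ∂AddCircle.haarAddCircle) := by
  have h := fourierBasis.hasSum_inner_mul_inner hf.toLp hg.toLp
  simp_rw [← inner_conj_symm hf.toLp (fourierBasis _), ← HilbertBasis.repr_apply_apply,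
    fourierBasis_repr, fourierCoeff_congr_ae hf.coeFn_toLp,
    fourierCoeff_congr_ae hg.coeFn_toLp] at h
  rw [MeasureTheory.L2.inner_def] at h
  convert! h using 1
  refine integral_congr_ae ?_
  filter_upwards [hf.coeFn_toLp, hg.coeFn_toLp] with x hx hy
  rw [hx, hy, RCLike.inner_apply']

/-- **Parseval's identity** on the unit interval, with explicit Fourier coefficients. -/
theorem hasSum_conj_integral_exp_mul {f g : ℝ → ℂ}
    (hf : MemLp f 2 (volume.restrict (Set.Ioc 0 1)))
    (hg : MemLp g 2 (volume.restrict (Set.Ioc 0 1))) :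
    HasSum (fun n : ℤ => conj (∫ t in (0 : ℝ)..1, exp (-(2 * π * I * n * t)) * f t) *
        ∫ t in (0 : ℝ)..1, exp (-(2 * π * I * n * t)) * g t)
      (∫ t in (0 : ℝ)..1, conj (f t) * g t) := by
  have coeff (u : ℝ → ℂ) (n : ℤ) : fourierCoeff (AddCircle.liftIoc 1 0 u) n =
      ∫ t in (0 : ℝ)..1, exp (-(2 * π * I * n * t)) * u t := by
    rw [fourierCoeff_eq_intervalIntegral _ n 0, zero_add, div_one, one_smul]
    refine intervalIntegral.integral_congr_ae (ae_of_all _ fun t ht => ?_)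
    rw [Set.uIoc_of_le zero_le_one] at ht
    rw [AddCircle.liftIoc_coe_apply (by simpa using ht), fourier_coe_apply, smul_eq_mul]
    congr 2
    push_cast
    ring
  have memLp {u : ℝ → ℂ} (hu : MemLp u 2 (volume.restrict (Set.Ioc 0 1))) :
      MemLp (AddCircle.liftIoc 1 0 u) 2 AddCircle.haarAddCircle :=
    (MemLp.memLp_liftIoc (by simpa using hu)).haarAddCircle
  have h := hasSum_conj_fourierCoeff_mul (memLp hf) (memLp hg)
  simp_rw [coeff] at h
  convert h using 1
  have := coeff (fun t => conj (f t) * g t) 0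
  simp only [Int.cast_zero, mul_zero, zero_mul, neg_zero, Complex.exp_zero, one_mul] at this
  rw [← this, fourierCoeff]
  refine integral_congr_ae (ae_of_all _ fun x => ?_)
  simp [AddCircle.liftIoc]

theorem measurable_sgn : Measurable sgn :=
  Measurable.ite measurableSet_Ioi measurable_const
    (Measurable.ite measurableSet_Iio measurable_const measurable_const)

theorem sgn_mul (a b : ℝ) : sgn (a * b) = sgn a * sgn b := by
  unfold sgn
  rcases lt_trichotomy a 0 with ha | rfl | ha <;> rcases lt_trichotomy b 0 with hb | rfl | hb <;>
    simp [*, mul_pos_of_neg_of_neg, mul_neg_of_neg_of_pos, mul_neg_of_pos_of_neg, le_of_lt,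
      not_lt_of_ge]

theorem abs_sgn_le_one (a : ℝ) : |sgn a| ≤ 1 := by
  unfold sgn
  split_ifs <;> simp

/-- The square wave `x ↦ sgn (cos (2 π x))`, as a complex valued function. -/
noncomputable def squareWave (x : ℝ) : ℂ := (sgn (Real.cos (2 * π * x)) : ℂ)

theorem measurable_squareWave : Measurable squareWave :=
  Complex.measurable_ofReal.comp (measurable_sgn.comp (by fun_prop))

theorem norm_squareWave_le_one (x : ℝ) : ‖squareWave x‖ ≤ 1 := by
  simpa [squareWave] using abs_sgn_le_one _

theorem squareWave_periodic : Function.Periodic squareWave 1 := fun x => by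
  rw [squareWave, squareWave, mul_add, mul_one, Real.cos_add_two_pi]

theorem squareWave_add_half (x : ℝ) : squareWave (x + 1 / 2) = -squareWave x := by
  have h : sgn (-Real.cos (2 * π * x)) = -sgn (Real.cos (2 * π * x)) := by
    rw [neg_eq_neg_one_mul, sgn_mul]
    have : sgn (-1) = -1 := by norm_num [sgn]
    rw [this, neg_one_mul]
  rw [squareWave, squareWave, show 2 * π * (x + 1 / 2) = 2 * π * x + π by ring, Real.cos_add_pi, h,
    Complex.ofReal_neg]

theorem squareWave_eq_one {x : ℝ} (hx : x ∈ Set.Ioo (-(1 / 4) : ℝ) (1 / 4)) :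
    squareWave x = 1 := by
  have : 0 < Real.cos (2 * π * x) := Real.cos_pos_of_mem_Ioo
    ⟨by nlinarith [hx.1, pi_pos], by nlinarith [hx.2, pi_pos]⟩
  simp [squareWave, sgn, this]

theorem conj_squareWave (x : ℝ) : conj (squareWave x) = squareWave x := Complex.conj_ofReal _

theorem intervalIntegrable_exp_mul_squareWave (c : ℂ) (α a b : ℝ) :
    IntervalIntegrable (fun t : ℝ => exp (c * t) * squareWave (t - α)) volume a b := by
  refine IntervalIntegrable.continuousOn_mul ?_ (by fun_prop)
  rw [intervalIntegrable_iff]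
  exact Measure.integrableOn_of_bounded (M := 1) (by simp)
    (measurable_squareWave.comp (by fun_prop)).aestronglyMeasurable
    (ae_of_all _ fun t => norm_squareWave_le_one _)

theorem exp_mul_squareWave_periodic (m : ℤ) (α : ℝ) :
    Function.Periodic (fun t : ℝ => exp (-(2 * π * I * m) * t) * squareWave (t - α)) 1 := fun t => by
  have h : exp (-(2 * π * I * m) * (t + 1 : ℝ)) = exp (-(2 * π * I * m) * t) := by
    rw [Complex.exp_eq_exp_iff_exists_int]
    exact ⟨-m, by push_cast; ring⟩
  simp only [h]
  rw [add_sub_right_comm, squareWave_periodic]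

theorem integral_exp_quarter (m : ℤ) (hm : m ≠ 0) :
    ∫ t in (-(1 / 4) : ℝ)..(1 / 4), exp (-(2 * π * I * m) * t) =
      ((Real.sin (π * m / 2) / (π * m) : ℝ) : ℂ) := by
  have hm' : (m : ℂ) ≠ 0 := mod_cast hm
  have hπ : (π : ℂ) ≠ 0 := mod_cast pi_ne_zero
  rw [integral_exp_mul_complex (by simp [hm', hπ])]
  push_cast
  rw [Complex.sin]
  have h₁ : -(2 * π * I * m) * (1 / 4 : ℂ) = -(π * m / 2 : ℂ) * I := by ring
  have h₂ : -(2 * π * I * m) * (-(1 / 4) : ℂ) = (π * m / 2 : ℂ) * I := by ring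
  rw [h₁, h₂]
  field_simp
  rw [Complex.I_sq]
  ring

/-- The Fourier coefficients of the square wave. -/
theorem integral_exp_mul_squareWave (m : ℤ) :
    ∫ t in (0 : ℝ)..1, exp (-(2 * π * I * m) * t) * squareWave t =
      ((2 * Real.sin (π * m / 2) / (π * m) : ℝ) : ℂ) := by
  set h : ℝ → ℂ := fun t => exp (-(2 * π * I * m) * t) * squareWave t with h_def
  have hint (a b : ℝ) : IntervalIntegrable h volume a b := by
    simpa only [sub_zero] using intervalIntegrable_exp_mul_squareWave (-(2 * π * I * m)) 0 a b
  have hper : Function.Periodic h 1 := by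
    simpa only [sub_zero] using exp_mul_squareWave_periodic m 0
  have hshift := hper.intervalIntegral_add_eq 0 (-(1 / 4))
  rw [zero_add] at hshift
  have hhalf (t : ℝ) : h (t + 1 / 2) = -exp (-(π * I * m)) * h t := by
    simp only [h_def, squareWave_add_half]
    rw [show -(2 * π * I * m) * ((t + 1 / 2 : ℝ) : ℂ) = -(2 * π * I * m) * t + -(π * I * m) by
      push_cast; ring, Complex.exp_add]
    ring
  have hquarter : ∫ t in (-(1 / 4) : ℝ)..(1 / 4), h t =
      ∫ t in (-(1 / 4) : ℝ)..(1 / 4), exp (-(2 * π * I * m) * t) :=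
    intervalIntegral.integral_congr_Ioo_of_le (by norm_num) fun t ht => by
      simp [h_def, squareWave_eq_one ht]
  have hsecond : ∫ t in (1 / 4 : ℝ)..(-(1 / 4) + 1), h t =
      -exp (-(π * I * m)) * ∫ t in (-(1 / 4) : ℝ)..(1 / 4), h t := by
    rw [← intervalIntegral.integral_const_mul]
    simp_rw [← hhalf]
    rw [intervalIntegral.integral_comp_add_right]
    norm_num
  rw [hshift, ← intervalIntegral.integral_add_adjacent_intervals (hint _ (1 / 4)) (hint _ _),
    hsecond, hquarter]
  rcases eq_or_ne m 0 with rfl | hm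
  · simp
  rw [integral_exp_quarter m hm]
  rcases Int.even_or_odd' m with ⟨k, rfl | rfl⟩
  · have : Real.sin (π * (2 * k : ℤ) / 2) = 0 := by
      rw [show π * (2 * k : ℤ) / 2 = k * π by push_cast; ring, Real.sin_int_mul_pi]
    simp only [this]
    simp
  · have : exp (-(π * I * (2 * k + 1 : ℤ))) = -1 := by
      rw [← Complex.exp_pi_mul_I, Complex.exp_eq_exp_iff_exists_int]
      exact ⟨-k - 1, by push_cast; ring⟩
    rw [this]
    push_cast
    ring

theorem integral_exp_mul_squareWave_sub (m : ℤ) (α : ℝ) :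
    ∫ t in (0 : ℝ)..1, exp (-(2 * π * I * m) * t) * squareWave (t - α) =
      exp (-(2 * π * I * m) * α) * ((2 * Real.sin (π * m / 2) / (π * m) : ℝ) : ℂ) := by
  rw [← integral_exp_mul_squareWave, ← intervalIntegral.integral_const_mul]
  have h := (exp_mul_squareWave_periodic m α).intervalIntegral_add_eq 0 α
  rw [zero_add] at h
  have hshift := intervalIntegral.integral_comp_add_right (a := 0) (b := 1)
    (fun t : ℝ => exp (-(2 * π * I * m) * t) * squareWave (t - α)) α
  rw [zero_add, add_comm 1 α] at hshift
  rw [h, ← hshift]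
  refine intervalIntegral.integral_congr fun t _ => ?_
  simp only [add_sub_cancel_right]
  rw [← mul_assoc, ← Complex.exp_add]
  congr 2
  push_cast
  ring

/-- The Fourier coefficients of `t ↦ squareWave (p * t - α)` at multiples of `p`. -/
theorem integral_exp_mul_squareWave_comp_mul {p : ℤ} (hp : p ≠ 0) (m : ℤ) (α : ℝ) :
    ∫ t in (0 : ℝ)..1, exp (-(2 * π * I * (p * m : ℤ) * t)) * squareWave (p * t - α) =
      exp (-(2 * π * I * m) * α) * ((2 * Real.sin (π * m / 2) / (π * m) : ℝ) : ℂ) := by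
  have hp' : (p : ℝ) ≠ 0 := mod_cast hp
  set h : ℝ → ℂ := fun t => exp (-(2 * π * I * m) * t) * squareWave (t - α) with h_def
  have hcomp : ∀ t : ℝ, exp (-(2 * π * I * (p * m : ℤ) * t)) * squareWave (p * t - α) =
      h (p * t) := fun t => by
    simp only [h_def]
    congr 2
    push_cast
    ring
  simp_rw [hcomp]
  rw [intervalIntegral.integral_comp_mul_left _ hp', ← integral_exp_mul_squareWave_sub]
  have := (exp_mul_squareWave_periodic m α).intervalIntegral_add_zsmul_eq p 0
    (intervalIntegrable_exp_mul_squareWave _ α)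
  simp only [zsmul_eq_mul, mul_one, zero_add] at this
  rw [mul_zero, mul_one, this, Complex.real_smul, ← mul_assoc]
  have hp'' : (p : ℂ) ≠ 0 := mod_cast hp
  push_cast
  rw [inv_mul_cancel₀ hp'', one_mul]

/-- The Fourier coefficients of `t ↦ squareWave (p * t - α)` vanish away from multiples of `p`. -/
theorem integral_exp_mul_squareWave_comp_mul_eq_zero {p n : ℤ} (hp : p ≠ 0) (hn : ¬p ∣ n)
    (α : ℝ) :
    ∫ t in (0 : ℝ)..1, exp (-(2 * π * I * n * t)) * squareWave (p * t - α) = 0 := by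
  have hp' : (p : ℝ) ≠ 0 := mod_cast hp
  have hpc : (p : ℂ) ≠ 0 := mod_cast hp
  set h : ℝ → ℂ := fun t => exp (-(2 * π * I * n * t)) * squareWave (p * t - α) with h_def
  have hper : Function.Periodic h 1 := fun t => by
    have h₁ : exp (-(2 * π * I * n * (t + 1 : ℝ))) = exp (-(2 * π * I * n * t)) := by
      rw [Complex.exp_eq_exp_iff_exists_int]
      exact ⟨-n, by push_cast; ring⟩
    have h₂ : squareWave (p * (t + 1) - α) = squareWave (p * t - α) := by
      have := squareWave_periodic.int_mul p (p * t - α)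
      rw [← this]
      congr 1
      ring
    simp only [h_def, h₁, h₂]
  have hstep (t : ℝ) : h (t + (p : ℝ)⁻¹) = exp (-(2 * π * I * n / p)) * h t := by
    have h₂ : squareWave (p * (t + (p : ℝ)⁻¹) - α) = squareWave (p * t - α) := by
      rw [← squareWave_periodic (p * t - α)]
      congr 1
      field_simp
      ring
    simp only [h_def, h₂]
    rw [← mul_assoc, ← Complex.exp_add]
    congr 2
    push_cast
    ring
  have hinv : ∫ t in (0 : ℝ)..1, h t = exp (-(2 * π * I * n / p)) * ∫ t in (0 : ℝ)..1, h t := by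
    have := hper.intervalIntegral_add_eq 0 (p : ℝ)⁻¹
    rw [zero_add] at this
    rw [← intervalIntegral.integral_const_mul]
    simp_rw [← hstep]
    rw [intervalIntegral.integral_comp_add_right, this, zero_add, add_comm]
  have hne : exp (-(2 * π * I * n / p)) ≠ 1 := by
    rw [Ne, Complex.exp_eq_one_iff]
    rintro ⟨k, hk⟩
    have : (n : ℂ) = p * (-k : ℤ) := by
      field_simp at hk
      push_cast
      linear_combination -hk
    exact hn ⟨-k, mod_cast this⟩
  by_contra h0
  exact hne (mul_right_cancel₀ h0 (by rw [one_mul, ← hinv]))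

theorem memLp_squareWave_comp_mul (p : ℤ) (α : ℝ) :
    MemLp (fun t : ℝ => squareWave (p * t - α)) 2 (volume.restrict (Set.Ioc 0 1)) :=
  MemLp.of_bound (measurable_squareWave.comp (by fun_prop)).aestronglyMeasurable 1
    (ae_of_all _ fun _ => norm_squareWave_le_one _)

theorem ofReal_Φ (u v : ℝ) : (Φ u v : ℂ) = conj (squareWave u) * squareWave v := by
  rw [conj_squareWave, Φ, sgn_mul, squareWave, squareWave, Complex.ofReal_mul]

/-- The correlation of two square waves of coprime frequencies as a sum over `ℤ`. -/
theorem hasSum_int_integral_Φ {p q : ℤ} (hp : p ≠ 0) (hq : q ≠ 0) (hcop : IsCoprime p q)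
    (α β : ℝ) :
    HasSum (fun k : ℤ => exp (2 * π * k * (q * α - p * β) * I) *
        ((4 / (π ^ 2 * p * q) * (Real.sin (π * k * p / 2) * Real.sin (π * k * q / 2) / k ^ 2) : ℝ)
          : ℂ))
      ((∫ t in (0 : ℝ)..1, Φ (p * t - α) (q * t - β) : ℝ) : ℂ) := by
  have h := hasSum_conj_integral_exp_mul (memLp_squareWave_comp_mul p α)
    (memLp_squareWave_comp_mul q β)
  simp_rw [← ofReal_Φ] at h
  rw [intervalIntegral.integral_ofReal] at h
  have hinj : Function.Injective fun k : ℤ => p * q * k :=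
    mul_right_injective₀ (mul_ne_zero hp hq)
  rw [← hinj.hasSum_iff] at h
  · convert h using 2 with k
    have hF := integral_exp_mul_squareWave_comp_mul hp (q * k) α
    have hG := integral_exp_mul_squareWave_comp_mul hq (p * k) β
    rw [show p * (q * k) = p * q * k by ring] at hF
    rw [show q * (p * k) = p * q * k by ring] at hG
    simp only [Function.comp_apply]
    rw [hF, hG, map_mul, Complex.conj_ofReal, ← Complex.exp_conj, mul_mul_mul_comm,
      ← Complex.exp_add, ← Complex.ofReal_mul]
    congr 1
    · congr 1
      simp only [map_mul, map_neg, Complex.conj_I, Complex.conj_ofReal, map_intCast, map_ofNat]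
      push_cast
      ring
    · congr 1
      rw [show π * (q * k : ℤ) / 2 = π * k * q / 2 by push_cast; ring,
        show π * (p * k : ℤ) / 2 = π * k * p / 2 by push_cast; ring]
      push_cast
      ring
  · intro n hn
    by_cases hpn : p ∣ n
    · have hqn : ¬q ∣ n := fun hqn => hn <| by
        obtain ⟨k, rfl⟩ := hcop.mul_dvd hpn hqn
        exact ⟨k, rfl⟩
      rw [integral_exp_mul_squareWave_comp_mul_eq_zero hq hqn, mul_zero]
    · rw [integral_exp_mul_squareWave_comp_mul_eq_zero hp hpn, map_zero, zero_mul]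

/-- The correlation of two square waves of coprime frequencies as a sum over positive integers. -/
theorem hasSum_nat_integral_Φ {p q : ℤ} (hp : p ≠ 0) (hq : q ≠ 0) (hcop : IsCoprime p q)
    (α β : ℝ) :
    HasSum (fun k : ℕ => 8 / (π ^ 2 * p * q) *
        (Real.sin (π * (k + 1) * p / 2) * Real.sin (π * (k + 1) * q / 2) *
          Real.cos (2 * π * (k + 1) * (p * β - q * α)) / (k + 1) ^ 2))
      (∫ t in (0 : ℝ)..1, Φ (p * t - α) (q * t - β)) := by
  have h := (hasSum_nat_add_iff' 1).mpr (hasSum_int_integral_Φ hp hq hcop α β).nat_add_neg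
  rw [← Complex.hasSum_ofReal]
  convert! h using 1
  · ext k
    have hodd (r : ℤ) : Real.sin (π * ((-((k + 1 : ℕ) : ℤ) : ℤ) : ℝ) * r / 2) =
        -Real.sin (π * (k + 1) * r / 2) := by
      rw [← Real.sin_neg]
      congr 1
      push_cast
      ring
    rw [hodd, hodd, show 2 * π * (k + 1) * (p * β - q * α) = -(2 * π * (k + 1) * (q * α - p * β)) by
      ring, Real.cos_neg]
    push_cast
    rw [Complex.cos]
    ring_nf
  · simp

theorem period_integral_fourier_series
    (p q : ℤ) (hp : p ≠ 0) (hq : q ≠ 0) (hcop : IsCoprime p q) (α β : ℝ) :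
    Summable (fun k : ℕ =>
      |Real.sin (π * ((k : ℝ) + 1) * (p : ℝ) / 2) * Real.sin (π * ((k : ℝ) + 1) * (q : ℝ) / 2) *
        Real.cos (2 * π * ((k : ℝ) + 1) * ((p : ℝ) * β - (q : ℝ) * α)) / ((k : ℝ) + 1) ^ 2|) ∧
    (∫ t in (0:ℝ)..1, Φ ((p : ℝ) * t - α) ((q : ℝ) * t - β)) =
      (8 / (π ^ 2 * (p : ℝ) * (q : ℝ))) *
        ∑' k : ℕ,
          Real.sin (π * ((k : ℝ) + 1) * (p : ℝ) / 2) * Real.sin (π * ((k : ℝ) + 1) * (q : ℝ) / 2) *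
            Real.cos (2 * π * ((k : ℝ) + 1) * ((p : ℝ) * β - (q : ℝ) * α)) / ((k : ℝ) + 1) ^ 2 := by
  have h := hasSum_nat_integral_Φ hp hq hcop α β
  refine ⟨?_, by rw [← tsum_mul_left, h.tsum_eq]⟩
  have hc : (8 / (π ^ 2 * (p : ℝ) * (q : ℝ))) ≠ 0 := by
    have hp' : (p : ℝ) ≠ 0 := mod_cast hp
    have hq' : (q : ℝ) ≠ 0 := mod_cast hq
    positivity
  exact ((summable_mul_left_iff hc).mp h.summable).abs
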